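/- Let H₁, H₂ be Hilbert spaces and u : H₁ → H₂ a bounded operator. Then u is Hilbert-Schmidt if and only if u is weak*-1-nuclear, i.e., there exist a sequence (xₙ*) in H₁ with sup_{‖x‖≤1} ∑ₙ |⟨xₙ*, x⟩| < ∞ and a bounded sequence (yₙ) in H₂ such that u x = ∑ₙ ⟨x, xₙ*⟩ yₙ for all x ∈ H₁. -/

import Mathlib

/-! A Hilbert-Schmidt operator expands along an orthonormal basis as `u x = ∑ᵢ ⟨x, eᵢ⟩ u eᵢ`. Only
countably many terms are nonzero, so `xᵢ = ‖u eᵢ‖ eᵢ` and `yᵢ = u eᵢ / ‖u eᵢ‖` give the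
representation, and `∑ᵢ |⟨xᵢ, x⟩| ≤ ∑ᵢ (‖u eᵢ‖² + ⟨eᵢ, x⟩²)` bounds the weak `ℓ₁` norm. No singular
decomposition is needed.

Conversely let `u x = ∑ₙ ⟨x, xₙ⟩ yₙ` with `‖yₙ‖ ≤ D` and weak `ℓ₁` bound `C` for `(xₙ)`. For finitely
many members `eᵢ` of an orthonormal basis put `v = ∑ᵢ ⟨eᵢ, ·⟩ u eᵢ` and `σ² = ∑ᵢ ‖u eᵢ‖²`. Then
`σ² = ∑ₙ ⟨yₙ, v xₙ⟩ ≤ D ∑ₙ ‖v xₙ‖`, so it suffices that a finite-rank operator is absolutely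
summing with constant at most `2 σ`: `∑ₙ ‖v xₙ‖ ≤ 2 C σ` (`sum_norm_le_of_weak_l1`), whence
`σ ≤ 2 C D` uniformly in the finite set. The absolutely summing bound is the `L₁`-`L₂` Khinchin
inequality (`khinchin`) applied to the coordinates of `v xₙ`, combined with the orthogonality of
signs (`sum_sq_signedSum`). -/

open scoped BigOperators RealInnerProductSpace

/-- The combination `∑ⱼ ±gⱼ`, with sign `+` where `ε j` is true and `-` elsewhere. -/
def signedSum {V : Type*} [AddCommGroup V] {m : ℕ} (g : Fin m → V) (ε : Fin m → Bool) : V :=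
  ∑ j, if ε j then g j else -g j

/-- Averages over signs can be taken one coordinate at a time. -/
lemma sum_signedSum_succ {V : Type*} [AddCommGroup V] {m : ℕ} (g : Fin (m + 1) → V)
    (F : V → ℝ) :
    ∑ ε, F (signedSum g ε) =
      ∑ ε, (F (signedSum (fun j => g j.succ) ε + g 0) +
        F (signedSum (fun j => g j.succ) ε - g 0)) := by
  rw [← (Fin.consEquiv (fun _ : Fin (m + 1) => Bool)).sum_comp, Fintype.sum_prod_type,
    Fintype.sum_bool, ← Finset.sum_add_distrib]
  refine Finset.sum_congr rfl fun ε _ => ?_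
  simp [signedSum, Fin.consEquiv, Fin.sum_univ_succ, add_comm, sub_eq_add_neg]

/-- Independent signs are orthogonal: `E ‖∑ⱼ ±gⱼ‖² = ∑ⱼ ‖gⱼ‖²`. -/
lemma sum_sq_signedSum {V : Type*} [NormedAddCommGroup V] [InnerProductSpace ℝ V] :
    ∀ {m : ℕ} (g : Fin m → V), ∑ ε, ‖signedSum g ε‖ ^ 2 = 2 ^ m * ∑ j, ‖g j‖ ^ 2 := by
  intro m
  induction m with
  | zero => intro g; simp [signedSum]
  | succ m ih =>
    intro g
    rw [sum_signedSum_succ g (fun v => ‖v‖ ^ 2)]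
    have h : ∀ a b : V, ‖a + b‖ ^ 2 + ‖a - b‖ ^ 2 = 2 * ‖a‖ ^ 2 + 2 * ‖b‖ ^ 2 := by
      intro a b
      rw [norm_add_sq_real, norm_sub_sq_real]; ring
    simp only [h, Finset.sum_add_distrib, ← Finset.mul_sum, ih]
    simp [Fin.sum_univ_succ]
    ring

lemma sum_sq_signedSum_real {m : ℕ} (c : Fin m → ℝ) :
    ∑ ε, signedSum c ε ^ 2 = 2 ^ m * ∑ j, c j ^ 2 := by
  simpa using sum_sq_signedSum c

/-- The fourth moment bound `E (∑ⱼ ±cⱼ)⁴ ≤ 3 (∑ⱼ cⱼ²)²`. -/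
lemma sum_pow_four_signedSum_le :
    ∀ {m : ℕ} (c : Fin m → ℝ), ∑ ε, signedSum c ε ^ 4 ≤ 2 ^ m * (3 * (∑ j, c j ^ 2) ^ 2) := by
  intro m
  induction m with
  | zero => intro c; simp [signedSum]
  | succ m ih =>
    intro c
    rw [sum_signedSum_succ c (fun v => v ^ 4)]
    have h : ∀ a b : ℝ, (a + b) ^ 4 + (a - b) ^ 4 = 2 * a ^ 4 + 12 * b ^ 2 * a ^ 2 + 2 * b ^ 4 := by
      intro a b; ring
    have h1 := ih (fun j => c j.succ)
    simp only [h, Finset.sum_add_distrib, ← Finset.mul_sum, sum_sq_signedSum_real]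
    simp only [Finset.sum_const, Finset.card_univ, Fintype.card_pi, Fintype.card_bool,
      Finset.prod_const, Fintype.card_fin, nsmul_eq_mul, Fin.sum_univ_succ, pow_succ (2 : ℝ) m]
    push_cast
    have h2 : (0 : ℝ) ≤ 2 ^ m * c 0 ^ 4 := by positivity
    nlinarith

/-- Khinchin's inequality between the first and second moments:
`(∑ⱼ cⱼ²)^{1/2} ≤ 2 E |∑ⱼ ±cⱼ|`. -/
lemma khinchin {m : ℕ} (c : Fin m → ℝ) :
    2 ^ m * √(∑ j, c j ^ 2) ≤ 2 * ∑ ε, |signedSum c ε| := by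
  set σ := √(∑ j, c j ^ 2) with hσ
  have hσ2 : σ ^ 2 = ∑ j, c j ^ 2 := Real.sq_sqrt (Finset.sum_nonneg fun _ _ => sq_nonneg _)
  have hσ0 : 0 ≤ σ := Real.sqrt_nonneg _
  rcases hσ0.eq_or_lt with h0 | hpos
  · rw [← h0, mul_zero]; positivity
  -- `t ≤ 1 + t³ / 6` for `t = |s| / σ`, multiplied by `6 σ² s²`; integrating it against the
  -- second and fourth moments yields the claim.
  have key : ∀ s : ℝ, 6 * σ ^ 2 * s ^ 2 ≤ 6 * σ ^ 3 * |s| + s ^ 4 := by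
    intro s
    have hs := abs_nonneg s
    rw [← sq_abs s, ← Even.pow_abs (by decide : Even 4) s]
    generalize |s| = t at hs ⊢
    have : 0 ≤ 6 * σ ^ 3 + t ^ 3 - 6 * σ ^ 2 * t := by
      nlinarith [mul_nonneg (add_nonneg hs (mul_nonneg zero_le_two hσ0)) (sq_nonneg (t - 7/5*σ)),
        mul_nonneg hs (sq_nonneg (t - 7/5*σ)), mul_nonneg hσ0 (sq_nonneg (t - 7/5*σ)),
        pow_pos hpos 3, mul_nonneg hs (sq_nonneg σ)]
    nlinarith [mul_nonneg hs this]
  have hsum := Finset.sum_le_sum fun ε (_ : ε ∈ Finset.univ) => key (signedSum c ε)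
  rw [Finset.sum_add_distrib, ← Finset.mul_sum, ← Finset.mul_sum, sum_sq_signedSum_real,
    ← hσ2] at hsum
  have h4 := sum_pow_four_signedSum_le c
  rw [← hσ2] at h4
  have h3 : σ ^ 3 * (3 * (2 ^ m * σ)) ≤ σ ^ 3 * (3 * (2 * ∑ ε, |signedSum c ε|)) := by
    nlinarith
  have := le_of_mul_le_mul_left h3 (pow_pos hpos 3)
  linarith

lemma inner_signedSum {H : Type*} [NormedAddCommGroup H] [InnerProductSpace ℝ H] {m : ℕ}
    (x : H) (g : Fin m → H) (ε : Fin m → Bool) :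
    ⟪x, signedSum g ε⟫ = signedSum (fun j => ⟪x, g j⟫) ε := by
  unfold signedSum
  rw [inner_sum]
  refine Finset.sum_congr rfl fun j _ => ?_
  split_ifs <;> simp

/-- If `∑ₙ |⟨xₙ, x⟩| ≤ C ‖x‖` for all `x`, then Khinchin's inequality, applied for each `n`, gives
`∑ₙ (∑ⱼ ⟨xₙ, gⱼ⟩²)^{1/2} ≤ 2 C (∑ⱼ ‖gⱼ‖²)^{1/2}`. -/
lemma sum_sqrt_le_of_weak_l1 {H : Type*} [NormedAddCommGroup H] [InnerProductSpace ℝ H]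
    (t : Finset ℕ) (xs : ℕ → H) {C : ℝ} (hC : 0 ≤ C)
    (h : ∀ x, ∑ n ∈ t, |⟪xs n, x⟫| ≤ C * ‖x‖) {m : ℕ} (g : Fin m → H) :
    ∑ n ∈ t, √(∑ j, ⟪xs n, g j⟫ ^ 2) ≤ 2 * C * √(∑ j, ‖g j‖ ^ 2) := by
  have h2 : (0 : ℝ) < 2 ^ m := by positivity
  have hcs : ∑ ε, ‖signedSum g ε‖ ≤ 2 ^ m * √(∑ j, ‖g j‖ ^ 2) := by
    apply le_of_sq_le_sq _ (by positivity)
    have := sq_sum_le_card_mul_sum_sq (s := Finset.univ) (f := fun ε => ‖signedSum g ε‖)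
    rw [sum_sq_signedSum] at this
    simp only [Finset.card_univ, Fintype.card_pi, Fintype.card_bool, Finset.prod_const,
      Fintype.card_fin] at this
    push_cast at this
    rw [mul_pow, Real.sq_sqrt (by positivity)]
    linarith
  refine le_of_mul_le_mul_left ?_ h2
  calc 2 ^ m * ∑ n ∈ t, √(∑ j, ⟪xs n, g j⟫ ^ 2)
      = ∑ n ∈ t, 2 ^ m * √(∑ j, ⟪xs n, g j⟫ ^ 2) := Finset.mul_sum ..
    _ ≤ ∑ n ∈ t, 2 * ∑ ε, |⟪xs n, signedSum g ε⟫| := by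
        refine Finset.sum_le_sum fun n _ => ?_
        simp only [inner_signedSum]
        exact khinchin _
    _ = 2 * ∑ ε, ∑ n ∈ t, |⟪xs n, signedSum g ε⟫| := by
        rw [← Finset.mul_sum, Finset.sum_comm]
    _ ≤ 2 * ∑ ε, C * ‖signedSum g ε‖ := by
        gcongr
        exact h _
    _ = 2 * (C * ∑ ε, ‖signedSum g ε‖) := by rw [← Finset.mul_sum]
    _ ≤ 2 * (C * (2 ^ m * √(∑ j, ‖g j‖ ^ 2))) := by gcongr
    _ = _ := by ring

/-- The finite-rank operator `v = ∑ᵢ ⟨eᵢ, ·⟩ wᵢ`, with `(eᵢ)` orthonormal, is absolutely summing with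
constant at most twice its Hilbert-Schmidt norm `(∑ᵢ ‖wᵢ‖²)^{1/2}`. -/
lemma sum_norm_le_of_weak_l1 {H K ι : Type*} [NormedAddCommGroup H] [InnerProductSpace ℝ H]
    [NormedAddCommGroup K] [InnerProductSpace ℝ K]
    (t : Finset ℕ) (xs : ℕ → H) {C : ℝ} (hC : 0 ≤ C)
    (h : ∀ x, ∑ n ∈ t, |⟪xs n, x⟫| ≤ C * ‖x‖) {e : ι → H} (he : Orthonormal ℝ e) (w : ι → K)
    (I : Finset ι) :
    ∑ n ∈ t, ‖∑ i ∈ I, ⟪e i, xs n⟫ • w i‖ ≤ 2 * C * √(∑ i ∈ I, ‖w i‖ ^ 2) := by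
  classical
  -- Coordinates are taken in the finite-dimensional span of the vectors `w i`.
  let F : Submodule ℝ K := Submodule.span ℝ (↑(I.image w) : Set K)
  have : FiniteDimensional ℝ F := FiniteDimensional.span_finset ℝ _
  let b := stdOrthonormalBasis ℝ F
  have hb : ∀ v ∈ F, ∑ j, ⟪(b j : K), v⟫ ^ 2 = ‖v‖ ^ 2 := by
    intro v hv
    have := b.sum_sq_norm_inner_right ⟨v, hv⟩
    simpa using this
  have hw : ∀ i ∈ I, w i ∈ F := fun i hi =>
    Submodule.subset_span (by simpa using ⟨i, hi, rfl⟩)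
  -- `g j = v* (b j)`
  let g : Fin (Module.finrank ℝ F) → H := fun j => ∑ i ∈ I, ⟪(b j : K), w i⟫ • e i
  have hg : ∑ j, ‖g j‖ ^ 2 = ∑ i ∈ I, ‖w i‖ ^ 2 := by
    have : ∀ j, ‖g j‖ ^ 2 = ∑ i ∈ I, ⟪(b j : K), w i⟫ ^ 2 := by
      intro j
      rw [← real_inner_self_eq_norm_sq]
      simp only [g]
      rw [he.inner_sum]
      simp [sq]
    simp only [this]
    rw [Finset.sum_comm]
    exact Finset.sum_congr rfl fun i hi => hb _ (hw i hi)
  have hn : ∀ n, ‖∑ i ∈ I, ⟪e i, xs n⟫ • w i‖ = √(∑ j, ⟪xs n, g j⟫ ^ 2) := by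
    intro n
    have hv : ∑ i ∈ I, ⟪e i, xs n⟫ • w i ∈ F :=
      Submodule.sum_mem _ fun i hi => Submodule.smul_mem _ _ (hw i hi)
    rw [← Real.sqrt_sq (norm_nonneg (∑ i ∈ I, ⟪e i, xs n⟫ • w i)), ← hb _ hv]
    congr 1
    refine Finset.sum_congr rfl fun j _ => ?_
    simp only [g, inner_sum, inner_smul_right]
    congr 1
    refine Finset.sum_congr rfl fun i _ => ?_
    rw [real_inner_comm (e i), mul_comm]
  simp only [hn]
  rw [← hg]
  exact sum_sqrt_le_of_weak_l1 t xs hC h g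

/-- A representation indexed by an arbitrary set with countably many nonzero `x i` can be
reindexed by `ℕ`, padding by zeros. -/
lemma exists_nat_reindex {ι H₁ H₂ : Type*} [NormedAddCommGroup H₁] [InnerProductSpace ℝ H₁]
    [NormedAddCommGroup H₂] [InnerProductSpace ℝ H₂] (u : H₁ → H₂)
    (x : ι → H₁) (y : ι → H₂) (hx : (Function.support x).Countable) {C D : ℝ} (hD : 0 ≤ D)
    (hs : ∀ z, Summable fun i => |⟪x i, z⟫|)
    (hC : ∀ z, ‖z‖ ≤ 1 → ∑' i, |⟪x i, z⟫| ≤ C) (hy : ∀ i, ‖y i‖ ≤ D)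
    (hu : ∀ z, HasSum (fun i => ⟪z, x i⟫ • y i) (u z)) :
    ∃ (xs : ℕ → H₁) (ys : ℕ → H₂),
        (∀ z : H₁, Summable fun n => |⟪xs n, z⟫|) ∧
        (∃ C : ℝ, ∀ z : H₁, ‖z‖ ≤ 1 → ∑' n, |⟪xs n, z⟫| ≤ C) ∧
        (∃ D : ℝ, ∀ n, ‖ys n‖ ≤ D) ∧
        ∀ z : H₁, HasSum (fun n => ⟪z, xs n⟫ • ys n) (u z) := by
  classical
  have := hx.to_subtype
  obtain ⟨f, hf⟩ := exists_injective_nat (Function.support x)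
  let xs : ℕ → H₁ := Function.extend f (fun i => x i) 0
  let ys : ℕ → H₂ := Function.extend f (fun i => y i) 0
  have hxs : ∀ z, (fun n => |⟪xs n, z⟫|) =
      Function.extend f (fun i : Function.support x => |⟪x i, z⟫|) 0 := by
    intro z; ext n
    by_cases h : ∃ i, f i = n
    · obtain ⟨i, rfl⟩ := h
      simp [xs, hf.extend_apply]
    · simp [xs, Function.extend_apply' _ _ _ h]
  have hxy : ∀ z, (fun n => ⟪z, xs n⟫ • ys n) =
      Function.extend f (fun i : Function.support x => ⟪z, x i⟫ • y i) 0 := by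
    intro z; ext n
    by_cases h : ∃ i, f i = n
    · obtain ⟨i, rfl⟩ := h
      simp [xs, ys, hf.extend_apply]
    · simp [xs, Function.extend_apply' _ _ _ h]
  have h1 : ∀ z, HasSum (fun n => |⟪xs n, z⟫|) (∑' i, |⟪x i, z⟫|) := by
    intro z
    rw [hxs, hasSum_extend_zero hf]
    refine (hasSum_subtype_iff_of_support_subset (f := fun i => |⟪x i, z⟫|) ?_).2 (hs z).hasSum
    intro i hi h0
    exact hi (by simp [h0])
  refine ⟨xs, ys, fun z => (h1 z).summable, ⟨C, fun z hz => (h1 z).tsum_eq ▸ hC z hz⟩,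
    ⟨D, fun n => ?_⟩, fun z => ?_⟩
  · by_cases h : ∃ i, f i = n
    · obtain ⟨i, rfl⟩ := h
      simpa [ys, hf.extend_apply] using hy i
    · simpa [ys, Function.extend_apply' _ _ _ h] using hD
  · rw [hxy, hasSum_extend_zero hf]
    refine (hasSum_subtype_iff_of_support_subset (f := fun i => ⟪z, x i⟫ • y i) ?_).2 (hu z)
    intro i hi h0
    exact hi (by simp [h0])

/-- Between Hilbert spaces, `u` is Hilbert-Schmidt iff `u` is weak*-1-nuclear: there are
`(xₙ*) ⊂ H₁` with `sup_{‖x‖≤1} ∑ₙ |⟨xₙ*, x⟩| < ∞` and a bounded sequence `(yₙ) ⊂ H₂` such that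
`u x = ∑ₙ ⟨x, xₙ*⟩ yₙ` for all `x`. -/
theorem hilbertSchmidt_iff_weakStar_one_nuclear
    {H₁ H₂ : Type*} [NormedAddCommGroup H₁] [InnerProductSpace ℝ H₁] [CompleteSpace H₁]
    [NormedAddCommGroup H₂] [InnerProductSpace ℝ H₂] [CompleteSpace H₂]
    (u : H₁ →L[ℝ] H₂) :
    (∃ (s : Set H₁) (e : HilbertBasis s ℝ H₁), Summable fun i => ‖u (e i)‖ ^ 2) ↔
      ∃ (xs : ℕ → H₁) (ys : ℕ → H₂),
        (∀ x : H₁, Summable fun n => |⟪xs n, x⟫|) ∧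
        (∃ C : ℝ, ∀ x : H₁, ‖x‖ ≤ 1 → ∑' n, |⟪xs n, x⟫| ≤ C) ∧
        (∃ D : ℝ, ∀ n, ‖ys n‖ ≤ D) ∧
        ∀ x : H₁, HasSum (fun n => ⟪x, xs n⟫ • ys n) (u x) := by
  constructor
  · rintro ⟨s, e, he⟩
    have hsq : ∀ z, Summable fun i => ⟪e i, z⟫ ^ 2 := fun z => by
      simpa using e.orthonormal.inner_products_summable z
    have hle : ∀ z i, |⟪‖u (e i)‖ • e i, z⟫| ≤ ‖u (e i)‖ ^ 2 + ⟪e i, z⟫ ^ 2 := by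
      intro z i
      rw [real_inner_smul_left, abs_mul, abs_norm, ← sq_abs ⟪e i, z⟫]
      nlinarith [sq_nonneg (‖u (e i)‖ - |⟪e i, z⟫|), norm_nonneg (u (e i)), abs_nonneg ⟪e i, z⟫]
    have hs : ∀ z, Summable fun i => |⟪‖u (e i)‖ • e i, z⟫| := fun z =>
      .of_nonneg_of_le (fun _ => abs_nonneg _) (hle z) (he.add (hsq z))
    refine exists_nat_reindex u (fun i => ‖u (e i)‖ • e i) (fun i => ‖u (e i)‖⁻¹ • u (e i))
      (he.countable_support.mono ?_) (C := ∑' i, ‖u (e i)‖ ^ 2 + 1) (D := 1) zero_le_one hs ?_ ?_ ?_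
    · intro i hi h0
      have h0 : ‖u (e i)‖ = 0 := by simpa using h0
      exact hi (by simp only [h0, zero_smul])
    · intro z hz
      calc ∑' i, |⟪‖u (e i)‖ • e i, z⟫| ≤ ∑' i, (‖u (e i)‖ ^ 2 + ⟪e i, z⟫ ^ 2) :=
            (hs z).tsum_le_tsum (hle z) (he.add (hsq z))
        _ = ∑' i, ‖u (e i)‖ ^ 2 + ∑' i, ⟪e i, z⟫ ^ 2 := he.tsum_add (hsq z)
        _ ≤ _ := by
          gcongr
          have := e.orthonormal.tsum_inner_products_le z
          simp only [Real.norm_eq_abs, sq_abs] at this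
          nlinarith [norm_nonneg z]
    · intro i
      rw [norm_smul, norm_inv, norm_norm]
      exact inv_mul_le_one
    · intro z
      convert u.hasSum (e.hasSum_repr z) using 2 with i
      rw [map_smul, e.repr_apply_apply, real_inner_smul_right, smul_smul, real_inner_comm (e i) z]
      by_cases h : ‖u (e i)‖ = 0
      · simp [norm_eq_zero.1 h]
      · congr 1
        field_simp
  · rintro ⟨xs, ys, hs, ⟨C, hC⟩, ⟨D, hD⟩, hu⟩
    have hC0 : 0 ≤ C := by simpa using hC 0 (by simp)
    have hD0 : 0 ≤ D := (norm_nonneg _).trans (hD 0)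
    have hweak : ∀ (t : Finset ℕ) x, ∑ n ∈ t, |⟪xs n, x⟫| ≤ C * ‖x‖ := by
      intro t x
      rcases eq_or_ne x 0 with rfl | hx
      · simp
      have hx' : 0 < ‖x‖ := norm_pos_iff.2 hx
      have h1 := ((hs (‖x‖⁻¹ • x)).sum_le_tsum t fun _ _ => abs_nonneg _).trans
        (hC _ (by rw [norm_smul, norm_inv, norm_norm, inv_mul_cancel₀ hx'.ne']))
      simp only [real_inner_smul_right, abs_mul, abs_inv, abs_norm, ← Finset.mul_sum] at h1
      rwa [inv_mul_le_iff₀ hx', mul_comm] at h1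
    obtain ⟨s, e, -⟩ := exists_hilbertBasis ℝ H₁
    refine ⟨s, e, summable_of_sum_le (c := (2 * C * D) ^ 2) (fun _ => by positivity) fun I => ?_⟩
    have hsum : HasSum (fun n => ⟪ys n, ∑ i ∈ I, ⟪e i, xs n⟫ • u (e i)⟫)
        (∑ i ∈ I, ‖u (e i)‖ ^ 2) := by
      simp only [inner_sum]
      refine hasSum_sum fun i _ => ?_
      have := (innerSL ℝ (u (e i))).hasSum (hu (e i))
      simp only [innerSL_apply_apply, real_inner_self_eq_norm_sq] at this
      have hcomm : ∀ n, ⟪u (e i), ⟪e i, xs n⟫ • ys n⟫ = ⟪ys n, ⟪e i, xs n⟫ • u (e i)⟫ := by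
        intro n
        rw [real_inner_smul_right, real_inner_smul_right, real_inner_comm (ys n)]
      simpa only [hcomm] using this
    have hbound := hasSum_le_of_sum_le (c := D * (2 * C * √(∑ i ∈ I, ‖u (e i)‖ ^ 2))) hsum
      fun t => by
        refine le_trans ?_ (mul_le_mul_of_nonneg_left
          (sum_norm_le_of_weak_l1 t xs hC0 (hweak t) e.orthonormal (fun i => u (e i)) I) hD0)
        rw [Finset.mul_sum]
        exact Finset.sum_le_sum fun n _ => (real_inner_le_norm _ _).trans
          (mul_le_mul_of_nonneg_right (hD n) (norm_nonneg _))
    have hS := Real.sq_sqrt (show 0 ≤ ∑ i ∈ I, ‖u (e i)‖ ^ 2 by positivity)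
    -- `σ² ≤ 2 C D σ` forces `σ² ≤ (2 C D)²`.
    nlinarith [sq_nonneg (√(∑ i ∈ I, ‖u (e i)‖ ^ 2) - 2 * C * D)]
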